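/- arXiv:1811.01229 — 2 statements merged into one kernel-verified Lean document; each statement's English description precedes it below -/
import Mathlib

section
/- Let m ≥ 1 and let a_1, …, a_{2m} be positive integers. Then M⁺(a_1, …, a_{2m}) = −M(a_1+1, 2^{(a_2−1)}, a_3+2, 2^{(a_4−1)}, …, a_{2m−1}+2, 2^{(a_{2m})}, 1, 1). -/
/-- `M(c₁, …, c_n) = [[c₁,−1],[1,0]] ⋯ [[c_n,−1],[1,0]]`. -/
def Mneg (cs : List ℤ) : Matrix (Fin 2) (Fin 2) ℤ :=
  (cs.map fun c => !![c, -1; 1, 0]).prod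

/-- `M⁺(a₁, …, a_k) = [[a₁,1],[1,0]] ⋯ [[a_k,1],[1,0]]`. -/
def Mpos (as : List ℤ) : Matrix (Fin 2) (Fin 2) ℤ :=
  (as.map fun a => !![a, 1; 1, 0]).prod

/-- Auxiliary: converts `(a₁, …, a_{2m})` (treating every odd-position entry
with `+2`) to `(a₁+2, 2^(a₂−1), …, a_{2m−1}+2, 2^(a_{2m}), 1, 1)`. -/
def hz5Tail : List ℤ → List ℤ
  | [] => [1, 1]
  | [a] => [a + 2, 1, 1]
  | [a, b] => (a + 2) :: (List.replicate b.toNat 2 ++ [1, 1])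
  | a :: b :: l => (a + 2) :: (List.replicate (b - 1).toNat 2 ++ hz5Tail l)

/-- The conversion
`(a₁, …, a_{2m}) ↦ (a₁+1, 2^(a₂−1), a₃+2, 2^(a₄−1), …, a_{2m−1}+2, 2^(a_{2m}), 1, 1)`. -/
def hz5 : List ℤ → List ℤ
  | [] => [1, 1]
  | [a] => [a + 1, 1, 1]
  | [a, b] => (a + 1) :: (List.replicate b.toNat 2 ++ [1, 1])
  | a :: b :: l => (a + 1) :: (List.replicate (b - 1).toNat 2 ++ hz5Tail l)

/-!
Let `T = [[1,1],[0,1]]`. Conjugation by `T` turns each pair of factors of `M⁺` into a block of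
factors of `M`: `M(a+2, 2^(b−1)) = T · M⁺(a, b) · T⁻¹` for `b ≥ 1`. Neighbouring blocks telescope,
and at the right end `M(a+2, 2^(b), 1, 1) = −T · M⁺(a, b)`. The only factor left over is the `T`
on the left, which is removed by lowering the first entry from `a₁+2` to `a₁+1`.
-/

section

open ModularGroup (T coe_T)

theorem Mneg_append (l₁ l₂ : List ℤ) : Mneg (l₁ ++ l₂) = Mneg l₁ * Mneg l₂ := by
  simp only [Mneg, List.map_append, List.prod_append]

theorem Mneg_cons (c : ℤ) (l : List ℤ) : Mneg (c :: l) = !![c, -1; 1, 0] * Mneg l := by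
  simp only [Mneg, List.map_cons, List.prod_cons]

theorem Mpos_append (l₁ l₂ : List ℤ) : Mpos (l₁ ++ l₂) = Mpos l₁ * Mpos l₂ := by
  simp only [Mpos, List.map_append, List.prod_append]

theorem Mpos_pair (a b : ℤ) : Mpos [a, b] = !![a * b + 1, a; b, 1] := by
  simp [Mpos]

theorem T_mul_Mneg_cons (c : ℤ) (l : List ℤ) : T * Mneg (c :: l) = Mneg ((c + 1) :: l) := by
  have T_mul_factor : (T : Matrix (Fin 2) (Fin 2) ℤ) * !![c, -1; 1, 0] = !![c + 1, -1; 1, 0] := by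
    simp [coe_T]
  rw [Mneg_cons, Mneg_cons, ← mul_assoc, T_mul_factor]

theorem Mneg_replicate_two (t : ℕ) :
    Mneg (List.replicate t 2) = !![(t : ℤ) + 1, -t; t, 1 - t] := by
  induction t with
  | zero => simp [Mneg, Matrix.one_fin_two]
  | succ t ih =>
    rw [List.replicate_succ, Mneg_cons, ih, Matrix.mul_fin_two]
    push_cast
    ring_nf

theorem Mneg_cons_replicate_two_mul_T (a : ℤ) (t : ℕ) :
    Mneg ((a + 2) :: List.replicate t 2) * T = T * Mpos [a, t + 1] := by
  rw [Mneg_cons, Mneg_replicate_two, Mpos_pair, coe_T]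
  simp only [Matrix.mul_fin_two]
  ring_nf

theorem Mneg_cons_replicate_two_append_ones (a : ℤ) (t : ℕ) :
    Mneg ((a + 2) :: (List.replicate t 2 ++ [1, 1])) = -(T * Mpos [a, t]) := by
  have Mneg_one_one : Mneg [1, 1] = !![0, -1; 1, -1] := by simp [Mneg]
  rw [Mneg_cons, Mneg_append, Mneg_replicate_two, Mneg_one_one, Mpos_pair, coe_T]
  simp only [Matrix.mul_fin_two, Matrix.neg_of, Matrix.neg_cons, Matrix.neg_empty]
  ring_nf

theorem Mneg_hz5Tail_eq_neg_T_mul_Mpos : ∀ (a : List ℤ), a ≠ [] → Even a.length →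
    (∀ i (h : 2 * i + 1 < a.length), 1 ≤ a[2 * i + 1]) → Mneg (hz5Tail a) = -(T * Mpos a)
  | [], ha, _, _ => absurd rfl ha
  | [_], _, heven, _ => by simp at heven
  | [a, b], _, _, hpos => by
    have hb : 1 ≤ b := hpos 0 (by simp)
    lift b to ℕ using by lia
    rw [hz5Tail, Int.toNat_natCast, Mneg_cons_replicate_two_append_ones]
  | a :: b :: c :: l, _, heven, hpos => by
    have hb : 1 ≤ b := hpos 0 (by simp)
    obtain ⟨t, rfl⟩ : ∃ t : ℕ, b = t + 1 := ⟨(b - 1).toNat, by lia⟩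
    have ih : Mneg (hz5Tail (c :: l)) = -(T * Mpos (c :: l)) :=
      Mneg_hz5Tail_eq_neg_T_mul_Mpos (c :: l) (List.cons_ne_nil c l)
        (by simpa [Nat.even_add_one] using heven)
        fun i hi => hpos (i + 1) (by simp only [List.length_cons] at hi ⊢; lia)
    have split_Mpos : Mpos (a :: (t + 1) :: c :: l) = Mpos [a, t + 1] * Mpos (c :: l) :=
      Mpos_append [a, t + 1] (c :: l)
    calc Mneg (hz5Tail (a :: (t + 1) :: c :: l))
      _ = Mneg (((a + 2) :: List.replicate t 2) ++ hz5Tail (c :: l)) := by simp [hz5Tail]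
      _ = -(Mneg ((a + 2) :: List.replicate t 2) * T * Mpos (c :: l)) := by
        rw [Mneg_append, ih, mul_neg, mul_assoc]
      _ = -(T * Mpos (a :: (t + 1) :: c :: l)) := by
        rw [Mneg_cons_replicate_two_mul_T, mul_assoc, split_Mpos]

theorem T_mul_Mneg_hz5_eq_Mneg_hz5Tail (a : List ℤ) (ha : a ≠ []) :
    T * Mneg (hz5 a) = Mneg (hz5Tail a) := by
  have add_one_add_one (x : ℤ) : x + 1 + 1 = x + 2 := by ring
  match a with
  | [_] | [_, _] | _ :: _ :: _ :: _ =>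
    simp only [hz5, hz5Tail, T_mul_Mneg_cons, add_one_add_one]

theorem stmt5_general (a : List ℤ) (ha : a ≠ []) (heven : Even a.length)
    (hpos : ∀ i (h : 2 * i + 1 < a.length), 1 ≤ a[2 * i + 1]) : Mpos a = -Mneg (hz5 a) := by
  have hT : IsUnit (T : Matrix (Fin 2) (Fin 2) ℤ) := by
    simp [Matrix.isUnit_iff_isUnit_det]
  apply hT.mul_left_cancel
  rw [mul_neg, T_mul_Mneg_hz5_eq_Mneg_hz5Tail a ha,
    Mneg_hz5Tail_eq_neg_T_mul_Mpos a ha heven hpos, neg_neg]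

end

/-- for positive integers `a₁, …, a_{2m}` (`m ≥ 1`),
`M⁺(a₁, …, a_{2m}) = −M(a₁+1, 2^(a₂−1), a₃+2, 2^(a₄−1), …, a_{2m−1}+2, 2^(a_{2m}), 1, 1)`. -/
theorem stmt5 (m : ℕ) (hm : 1 ≤ m) (a : List ℤ) (hlen : a.length = 2 * m)
    (ha : ∀ x ∈ a, 1 ≤ x) :
    Mpos a = -Mneg (hz5 a) := by
  have ha_ne : a ≠ [] := List.ne_nil_of_length_pos (by lia)
  exact stmt5_general a ha_ne ⟨m, by lia⟩ fun _ _ => ha _ (List.getElem_mem _)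
end

section
/- Let m ≥ 1 and let a_1, …, a_{2m} be positive integers. Set (c_1, …, c_k) = (a_1+1, 2^{(a_2−1)}, a_3+2, 2^{(a_4−1)}, …, a_{2m−1}+2, 2^{(a_{2m}−1)}) and (d_1, …, d_ℓ) = (a_{2m}+1, 2^{(a_{2m−1}−1)}, a_{2m−2}+2, 2^{(a_{2m−3}−1)}, …, a_2+2, 2^{(a_1−1)}) (the same construction applied to the reversed sequence). Then M(c_1, …, c_k, 1, d_1, …, d_ℓ, 1) = −Id, where Id is the 2×2 identity matrix. (This is the statement that the quiddity of the triangulation 𝕋_{r/s} associated to the rational r/s = [a_1,…,a_{2m}] satisfies M(c_1,…,c_n) = −Id.) -/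
/-- Auxiliary: converts `(a₁, a₂, a₃, …)` to `(a₁+2, 2^(a₂−1), a₃+2, 2^(a₄−1), …)`. -/
def hzTail : List ℤ → List ℤ
  | [] => []
  | [a] => [a + 2]
  | a :: b :: l => (a + 2) :: (List.replicate (b - 1).toNat 2 ++ hzTail l)

/-- The Hirzebruch conversion:
`(a₁, a₂, a₃, a₄, …) ↦ (a₁+1, 2^(a₂−1), a₃+2, 2^(a₄−1), …)`. -/
def hz : List ℤ → List ℤ
  | [] => []
  | [a] => [a + 1]
  | a :: b :: l => (a + 1) :: (List.replicate (b - 1).toNat 2 ++ hzTail l)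

/-!
Put `T = [[1,1],[0,1]]` and `S = [[0,−1],[1,0]]`, and let `P` be the product of the matrices
`[[aᵢ,1],[1,0]]`. The Hirzebruch conversion turns the regular continued fraction of `a` into the
negative one of `c`: `M(c) = P T⁻¹`. Since `T⁻¹ M(1) = S`, this gives `M(c, 1) = P S`. Each factor
of `P` is symmetric, so reversing `a` replaces `P` by `Pᵀ`; hence the matrix of the theorem is
`P S Pᵀ S = det(P) S² = −Id`, as `det P = 1` when the number of factors is even.
-/

open scoped Matrix

section ContinuantMatrix

variable {R : Type*} [CommRing R]

/-- The matrix `M⁺(a₁, …, a_n) = [[a₁,1],[1,0]] ⋯ [[a_n,1],[1,0]]` of the regular continued fraction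
`[a₁, …, a_n]`, the counterpart of `Mneg` for continued fractions with plus signs. -/
def continuantMatrix (a : List R) : Matrix (Fin 2) (Fin 2) R :=
  (a.map fun x => !![x, 1; 1, 0]).prod

theorem continuantMatrix_append (a b : List R) :
    continuantMatrix (a ++ b) = continuantMatrix a * continuantMatrix b := by
  simp only [continuantMatrix, List.map_append, List.prod_append]

theorem continuantMatrix_pair (x y : R) : continuantMatrix [x, y] = !![x * y + 1, x; y, 1] := by
  simp [continuantMatrix]

theorem det_continuantMatrix (a : List R) : (continuantMatrix a).det = (-1) ^ a.length := by
  induction a with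
  | nil => simp [continuantMatrix]
  | cons x a ih =>
    rw [← List.singleton_append, continuantMatrix_append, Matrix.det_mul, ih]
    simp [continuantMatrix, pow_succ']

theorem continuantMatrix_reverse (a : List R) :
    continuantMatrix a.reverse = (continuantMatrix a)ᵀ := by
  have hsymm (x : R) : !![x, 1; 1, 0]ᵀ = !![x, 1; 1, 0] := by
    simp [← Matrix.ext_iff, Fin.forall_fin_two]
  simp only [continuantMatrix, Matrix.transpose_list_prod, List.map_map, List.map_reverse,
    Function.comp_def, hsymm]

theorem shear_neg_mul_shear (x : R) : !![1, -x; 0, 1] * !![1, x; 0, 1] = 1 := by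
  simp [Matrix.one_fin_two]

theorem mul_rotation_mul_transpose (A : Matrix (Fin 2) (Fin 2) R) :
    A * !![0, -1; 1, 0] * Aᵀ = A.det • !![0, -1; 1, 0] := by
  ext i j
  fin_cases i <;> fin_cases j <;> simp [Matrix.mul_apply, Matrix.det_fin_two] <;> ring

end ContinuantMatrix

section Mneg

theorem mneg_append (c d : List ℤ) : Mneg (c ++ d) = Mneg c * Mneg d := by
  simp only [Mneg, List.map_append, List.prod_append]

theorem mneg_cons (x : ℤ) (c : List ℤ) : Mneg (x :: c) = !![x, -1; 1, 0] * Mneg c := by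
  simp only [Mneg, List.map_cons, List.prod_cons]

theorem mneg_add_cons (x y : ℤ) (c : List ℤ) :
    Mneg ((x + y) :: c) = !![1, y; 0, 1] * Mneg (x :: c) := by
  rw [mneg_cons, mneg_cons, ← mul_assoc, Matrix.mul_fin_two]
  ring_nf

theorem mneg_replicate_two (n : ℕ) :
    Mneg (List.replicate n 2) = !![(n : ℤ) + 1, -n; n, 1 - n] := by
  induction n with
  | zero => simp [Mneg, Matrix.one_fin_two]
  | succ n ih =>
    rw [List.replicate_succ, mneg_cons, ih, Matrix.mul_fin_two]
    push_cast
    ring_nf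

theorem mneg_add_two_cons_replicate_two (x : ℤ) (n : ℕ) :
    Mneg ((x + 2) :: List.replicate n 2) =
      !![1, 1; 0, 1] * continuantMatrix [x, n + 1] * !![1, -1; 0, 1] := by
  rw [mneg_cons, mneg_replicate_two, continuantMatrix_pair]
  simp only [Matrix.mul_fin_two]
  ring_nf

end Mneg

section Hirzebruch

variable {a : List ℤ}

theorem mneg_hz (hne : a ≠ []) : Mneg (hz a) = !![1, -1; 0, 1] * Mneg (hzTail a) := by
  have hshift (x : ℤ) : x + 1 = x + 2 + -1 := by ring
  match a with
  | [x] => rw [hz, hzTail, hshift, mneg_add_cons]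
  | x :: y :: a => rw [hz, hzTail, hshift, mneg_add_cons]

theorem mneg_hzTail (heven : Even a.length) (hpos : ∀ x ∈ a, 1 ≤ x) :
    Mneg (hzTail a) = !![1, 1; 0, 1] * continuantMatrix a * !![1, -1; 0, 1] := by
  induction a using List.twoStepInduction with
  | nil => simp [hzTail, Mneg, continuantMatrix, Matrix.one_fin_two]
  | singleton x => simp at heven
  | cons_cons x y a ih _ =>
    have ih := ih (by simpa [Nat.even_add_one] using heven)
      (fun z hmem => hpos z (by simp [hmem]))
    have hy : ((y - 1).toNat : ℤ) + 1 = y := by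
      have hy_pos : 1 ≤ y := hpos y (by simp)
      omega
    calc Mneg (hzTail (x :: y :: a))
        = Mneg ((x + 2) :: List.replicate (y - 1).toNat 2) * Mneg (hzTail a) := by
          rw [hzTail, ← List.cons_append, mneg_append]
      _ = !![1, 1; 0, 1] * continuantMatrix [x, y] * (!![1, -1; 0, 1] * !![1, 1; 0, 1]) *
            continuantMatrix a * !![1, -1; 0, 1] := by
          rw [mneg_add_two_cons_replicate_two, hy, ih]
          simp only [mul_assoc]
      _ = !![1, 1; 0, 1] * continuantMatrix ([x, y] ++ a) * !![1, -1; 0, 1] := by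
          rw [shear_neg_mul_shear, mul_one, continuantMatrix_append, ← mul_assoc]

theorem mneg_hz_append_one (hne : a ≠ []) (heven : Even a.length) (hpos : ∀ x ∈ a, 1 ≤ x) :
    Mneg (hz a ++ [1]) = continuantMatrix a * !![0, -1; 1, 0] := by
  have hone : !![1, -1; 0, 1] * Mneg [1] = !![0, -1; 1, 0] := by simp [Mneg]
  calc Mneg (hz a ++ [1])
      = (!![1, -1; 0, 1] * !![1, 1; 0, 1]) * continuantMatrix a *
          (!![1, -1; 0, 1] * Mneg [1]) := by
        rw [mneg_append, mneg_hz hne, mneg_hzTail heven hpos]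
        simp only [mul_assoc]
    _ = continuantMatrix a * !![0, -1; 1, 0] := by rw [shear_neg_mul_shear, one_mul, hone]

end Hirzebruch

/-- for positive integers `a₁, …, a_{2m}` (`m ≥ 1`), letting
`(c₁, …, c_k) = (a₁+1, 2^(a₂−1), a₃+2, …, a_{2m−1}+2, 2^(a_{2m}−1))` and
`(d₁, …, d_ℓ)` the same construction applied to the reversed sequence
`(a_{2m}, …, a₁)`, one has `M(c₁, …, c_k, 1, d₁, …, d_ℓ, 1) = −Id`. -/
theorem stmt7 (m : ℕ) (hm : 1 ≤ m) (a : List ℤ) (hlen : a.length = 2 * m)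
    (ha : ∀ x ∈ a, 1 ≤ x) :
    Mneg (hz a ++ [1] ++ hz a.reverse ++ [1]) = -1 := by
  have hne : a ≠ [] := List.ne_nil_of_length_pos (by omega)
  have heven : Even a.length := hlen ▸ even_two_mul m
  calc Mneg (hz a ++ [1] ++ hz a.reverse ++ [1])
      = Mneg (hz a ++ [1]) * Mneg (hz a.reverse ++ [1]) := by rw [List.append_assoc, mneg_append]
    _ = continuantMatrix a * !![0, -1; 1, 0] * (continuantMatrix a)ᵀ * !![0, -1; 1, 0] := by
        rw [mneg_hz_append_one hne heven ha,
          mneg_hz_append_one (by simpa using hne) (by simpa using heven) (by simpa using ha),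
          continuantMatrix_reverse, ← mul_assoc]
    _ = !![0, -1; 1, 0] * !![0, -1; 1, 0] := by
        rw [mul_rotation_mul_transpose, det_continuantMatrix, heven.neg_one_pow, one_smul]
    _ = -1 := by simp [Matrix.one_fin_two]
end
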